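/- Let $n\geq 1$, $s\in(0,1)$, $\alpha\in(0,1)$, $e,\omega\in\partial B_1\subset\mathbb{R}^n$ and $\varepsilon_o>0$ with $e+\varepsilon\omega\in B_1$ for all $\varepsilon\in(0,\varepsilon_o]$, and let $f\in C^\alpha(\mathbb{R}^n)$ with $f=0$ outside $B_1$. For $x,z\in B_1$, $x\neq z$, set $r_0(x,z)=\frac{(1-|x|^2)(1-|z|^2)}{|z-x|^2}$, $r_1(x,z)=\min\{r_0(x,z),1/2\}$, $G(x,z)=|z-x|^{2s-n}\int_0^{r_0(x,z)}t^{s-1}(t+1)^{-n/2}dt$ and $\mathcal{G}_0(x,z)=\frac{|z-x|^{2s-n}}{s}\,\big(r_1(x,z)\big)^s$, and let $\mathcal{D}_2(\varepsilon)=\{z\in B_1:\ r_0(e+\varepsilon\omega,z)\leq 1/2\}$. Then $\lim_{\varepsilon\searrow0}\varepsilon^{-s}\left(\int_{B_1}f(z)\,G(e+\varepsilon\omega,z)\,dz-\int_{\mathcal{D}_2(\varepsilon)}f(z)\,\mathcal{G}_0(e+\varepsilon\omega,z)\,dz\right)=0$; i.e. $\int_{B_1}f\,G(e+\varepsilon\omega,\cdot)=\int_{\mathcal{D}_2(\varepsilon)}f\,\mathcal{G}_0(e+\varepsilon\omega,\cdot)+o(\varepsilon^s)$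 as $\varepsilon\searrow0$. -/

import Mathlib

open MeasureTheory Filter Metric Set intervalIntegral
open scoped RealInnerProductSpace

/-- `r₀(x,z) = (1-|x|²)(1-|z|²)/|z-x|²`. -/
noncomputable def rZero {n : ℕ} (x z : EuclideanSpace ℝ (Fin n)) : ℝ :=
  (1 - ‖x‖ ^ 2) * (1 - ‖z‖ ^ 2) / ‖z - x‖ ^ 2

/-- `r₁ = min(r₀, 1/2)`. -/
noncomputable def rOne {n : ℕ} (x z : EuclideanSpace ℝ (Fin n)) : ℝ :=
  min (rZero x z) (1 / 2)

/-- The fractional Green-type function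
`G(x,z) = |z-x|^{2s-n} ∫₀^{r₀(x,z)} t^{s-1} (t+1)^{-n/2} dt`. -/
noncomputable def fracGreen (n : ℕ) (s : ℝ) (x z : EuclideanSpace ℝ (Fin n)) : ℝ :=
  ‖z - x‖ ^ (2 * s - n) * ∫ t in (0 : ℝ)..(rZero x z), t ^ (s - 1) / (t + 1) ^ ((n : ℝ) / 2)

/-- The principal part `𝒢₀(x,z) = |z-x|^{2s-n} (r₁(x,z))^s / s`. -/
noncomputable def fracGreenPrincipal (n : ℕ) (s : ℝ) (x z : EuclideanSpace ℝ (Fin n)) : ℝ :=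
  ‖z - x‖ ^ (2 * s - n) / s * rOne x z ^ s

/-!
Write `q x = 1 - ‖x‖²`, `d = ‖z - x‖` and `F(r) = ∫₀^r t^{s-1} (t+1)^{-n/2} dt`, so that
`G(x, z) = d^{2s-n} F(r₀)` with `r₀ = q(x) q(z) / d²`. Where `r₀ ≤ 1/2` the point `z` is far from
`x`, in the sense that `q(z) ≤ 3d`, and `F(r) = r^s / s + O(r^{s+1})`. Where `r₀ > 1/2` it is near,
in the sense that `q(z) ≤ 10 q(x)`, and the decay of `(t+1)^{-n/2}` gives `F(r) ≲ r^{s-θ}`. Either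
way, for small `τ > 0` the error committed on the kernel is `O(q(x)^{s+τ} d^{τ-n})`. As `d^{τ-n}` is
integrable and `q(x) = O(ε)` for `x = e + εω`, integrating against a bounded `f` leaves
`O(ε^{s+τ})`.
-/

/-- The radial profile `F(r) = ∫₀^r t^{s-1} (t+1)^{-a} dt`; the fractional Green function is built
on the case `a = n/2`. -/
noncomputable def greenProfile (a s r : ℝ) : ℝ :=
  ∫ t in (0 : ℝ)..r, t ^ (s - 1) / (t + 1) ^ a

section Profile

variable {a s r θ : ℝ}

lemma intervalIntegrable_greenProfile_integrand (a : ℝ) (hs : 0 < s) (hr : 0 ≤ r) :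
    IntervalIntegrable (fun t : ℝ => t ^ (s - 1) / (t + 1) ^ a) volume 0 r := by
  simp only [div_eq_mul_inv]
  refine (intervalIntegrable_rpow' (by linarith)).mul_continuousOn fun t ht => ?_
  rw [uIcc_of_le hr] at ht
  have ht1 : 0 < t + 1 := by linarith [ht.1]
  have hcont : ContinuousAt (fun t : ℝ => (t + 1) ^ a) t :=
    ContinuousAt.rpow_const (by fun_prop) (Or.inl ht1.ne')
  exact (hcont.inv₀ (by positivity)).continuousWithinAt

lemma greenProfile_nonneg (a s : ℝ) (hr : 0 ≤ r) : 0 ≤ greenProfile a s r :=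
  intervalIntegral.integral_nonneg hr fun t ht => by have := ht.1; positivity

lemma monotoneOn_greenProfile (a : ℝ) (hs : 0 < s) : MonotoneOn (greenProfile a s) (Ici 0) := by
  intro r₁ hr₁ r₂ hr₂ hle
  refine intervalIntegral.integral_mono_interval le_rfl hr₁ hle ?_
    (intervalIntegrable_greenProfile_integrand a hs hr₂)
  filter_upwards [ae_restrict_mem measurableSet_Ioc] with t ht
  have := ht.1
  positivity

lemma integral_rpow_sub_one (hs : 0 < s) (r : ℝ) :
    ∫ t in (0 : ℝ)..r, t ^ (s - 1) = r ^ s / s := by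
  rw [integral_rpow (Or.inl (by linarith)), sub_add_cancel, Real.zero_rpow hs.ne', sub_zero]

lemma greenProfile_le_rpow (hθ : 0 ≤ θ) (hθs : θ < s) (hθa : θ ≤ a) (hr : 0 ≤ r) :
    greenProfile a s r ≤ r ^ (s - θ) / (s - θ) := by
  rw [← integral_rpow_sub_one (sub_pos.2 hθs)]
  refine intervalIntegral.integral_mono_on_of_le_Ioo hr
    (intervalIntegrable_greenProfile_integrand a (hθ.trans_lt hθs) hr)
    (intervalIntegrable_rpow' (by linarith)) fun t ht => ?_
  have ht0 : 0 < t := ht.1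
  have hpow : t ^ θ ≤ (t + 1) ^ a :=
    (Real.rpow_le_rpow ht0.le (by linarith) hθ).trans
      (Real.rpow_le_rpow_of_exponent_le (by linarith) hθa)
  rw [sub_right_comm, Real.rpow_sub ht0 (s - 1) θ]
  gcongr

lemma one_sub_mul_le_inv_add_one_rpow {t : ℝ} (ha : 0 ≤ a) (ht : -1 < t) :
    1 - a * t ≤ ((t + 1) ^ a)⁻¹ := by
  have ht1 : 0 < t + 1 := by linarith
  have hexp : (t + 1) ^ a ≤ Real.exp (a * t) := by
    rw [mul_comm, Real.exp_mul]
    exact Real.rpow_le_rpow ht1.le (Real.add_one_le_exp t) ha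
  calc 1 - a * t ≤ Real.exp (-(a * t)) := Real.one_sub_le_exp_neg _
    _ = (Real.exp (a * t))⁻¹ := Real.exp_neg _
    _ ≤ ((t + 1) ^ a)⁻¹ := inv_anti₀ (by positivity) hexp

lemma rpow_div_sub_le_greenProfile (ha : 0 ≤ a) (hs : 0 < s) (hr : 0 ≤ r) :
    r ^ s / s - a * (r ^ (s + 1) / (s + 1)) ≤ greenProfile a s r := by
  have hs1 : 0 < s + 1 := by linarith
  have hmain : IntervalIntegrable (fun t : ℝ => t ^ (s - 1)) volume 0 r :=
    intervalIntegrable_rpow' (by linarith)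
  have hcorr : IntervalIntegrable (fun t : ℝ => a * t ^ (s + 1 - 1)) volume 0 r :=
    (intervalIntegrable_rpow' (by linarith)).const_mul _
  rw [← integral_rpow_sub_one hs, ← integral_rpow_sub_one hs1,
    ← intervalIntegral.integral_const_mul, ← intervalIntegral.integral_sub hmain hcorr]
  refine intervalIntegral.integral_mono_on_of_le_Ioo hr (hmain.sub hcorr)
    (intervalIntegrable_greenProfile_integrand a hs hr) fun t ht => ?_
  have ht0 : 0 < t := ht.1
  calc t ^ (s - 1) - a * t ^ (s + 1 - 1) = t ^ (s - 1) * (1 - a * t) := by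
        rw [add_sub_right_comm, Real.rpow_add_one ht0.ne']
        ring
    _ ≤ t ^ (s - 1) * ((t + 1) ^ a)⁻¹ := by
        gcongr
        exact one_sub_mul_le_inv_add_one_rpow ha (by linarith)
    _ = t ^ (s - 1) / (t + 1) ^ a := (div_eq_mul_inv _ _).symm

lemma abs_greenProfile_sub_le (ha : 0 ≤ a) (hs : 0 < s) (hr : 0 ≤ r) :
    |greenProfile a s r - r ^ s / s| ≤ a * r ^ (s + 1) := by
  have hupper : greenProfile a s r ≤ r ^ s / s := by
    simpa only [sub_zero] using greenProfile_le_rpow le_rfl hs ha hr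
  have hlower := rpow_div_sub_le_greenProfile ha hs hr
  have hcorr : a * (r ^ (s + 1) / (s + 1)) ≤ a * r ^ (s + 1) :=
    mul_le_mul_of_nonneg_left (div_le_self (by positivity) (by linarith)) ha
  rw [abs_of_nonpos (by linarith)]
  linarith

end Profile

section PowerKernel

lemma preimage_sub_right_ball_zero {E : Type*} [SeminormedAddCommGroup E] (x : E) (R : ℝ) :
    (· - x) ⁻¹' ball 0 R = ball x R := by
  ext z
  simp only [mem_preimage, mem_ball, dist_eq_norm, sub_zero]

lemma setIntegral_ball_norm_sub_rpow {E : Type*} [NormedAddCommGroup E] [MeasurableSpace E]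
    [BorelSpace E] (μ : Measure E) [μ.IsAddRightInvariant] (p : ℝ) (x : E) (R : ℝ) :
    ∫ z in ball x R, ‖z - x‖ ^ p ∂μ = ∫ z in ball (0 : E) R, ‖z‖ ^ p ∂μ := by
  rw [← preimage_sub_right_ball_zero]
  exact (measurePreserving_sub_right μ x).setIntegral_preimage_emb
    (MeasurableEquiv.subRight x).measurableEmbedding (fun z => ‖z‖ ^ p) _

variable {E : Type*} [NormedAddCommGroup E] [NormedSpace ℝ E] [FiniteDimensional ℝ E]
  [MeasurableSpace E] [BorelSpace E] (μ : Measure E) [μ.IsAddHaarMeasure] {p : ℝ}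

lemma integrableOn_ball_norm_rpow (hE : 1 ≤ Module.finrank ℝ E)
    (hp : -(Module.finrank ℝ E : ℝ) < p) (R : ℝ) :
    IntegrableOn (fun z : E => ‖z‖ ^ p) (ball 0 R) μ := by
  refine integrableOn_ball_of_norm_le_rpow (C := 1) (α := -p) hE (by linarith) ?_
    (measurable_norm.pow_const p).aestronglyMeasurable
  filter_upwards with z
  rw [Real.norm_of_nonneg (by positivity), neg_neg, one_mul]

lemma integrableOn_ball_norm_sub_rpow (hE : 1 ≤ Module.finrank ℝ E)
    (hp : -(Module.finrank ℝ E : ℝ) < p) (x : E) (R : ℝ) :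
    IntegrableOn (fun z : E => ‖z - x‖ ^ p) (ball x R) μ := by
  rw [← preimage_sub_right_ball_zero]
  exact ((measurePreserving_sub_right μ x).integrableOn_comp_preimage
    (MeasurableEquiv.subRight x).measurableEmbedding).2 (integrableOn_ball_norm_rpow μ hE hp R)

lemma setIntegral_norm_sub_rpow_le (hE : 1 ≤ Module.finrank ℝ E)
    (hp : -(Module.finrank ℝ E : ℝ) < p) {x : E} {A : Set E} {R : ℝ} (hA : A ⊆ ball x R) :
    ∫ z in A, ‖z - x‖ ^ p ∂μ ≤ ∫ z in ball (0 : E) R, ‖z‖ ^ p ∂μ := by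
  rw [← setIntegral_ball_norm_sub_rpow μ p x R]
  exact setIntegral_mono_set (integrableOn_ball_norm_sub_rpow μ hE hp x R)
    (Eventually.of_forall fun z => by positivity) hA.eventuallyLE

end PowerKernel

section UnitBall

variable {E : Type*} [SeminormedAddCommGroup E] {x z : E}

lemma one_sub_norm_sq_pos (hx : ‖x‖ < 1) : 0 < 1 - ‖x‖ ^ 2 := by
  nlinarith [norm_nonneg x]

lemma one_sub_norm_sq_le (hx : ‖x‖ < 1) (hz : ‖z‖ < 1) :
    1 - ‖z‖ ^ 2 ≤ 1 - ‖x‖ ^ 2 + 2 * ‖z - x‖ := by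
  have htri : ‖x‖ - ‖z‖ ≤ ‖z - x‖ := norm_sub_rev x z ▸ norm_sub_norm_le x z
  nlinarith [norm_nonneg x, norm_nonneg z, norm_nonneg (z - x)]

lemma norm_sub_le_two (hx : ‖x‖ < 1) (hz : ‖z‖ < 1) : ‖z - x‖ ≤ 2 := by
  linarith [norm_sub_le z x]

lemma unitBall_subset_ball_two (hx : ‖x‖ < 1) : ball (0 : E) 1 ⊆ ball x 2 :=
  ball_subset_ball' (by rw [dist_zero_left]; linarith)

end UnitBall

lemma rpow_mul_div_sq_rpow {d A : ℝ} (hd : 0 < d) (hA : 0 ≤ A) (b p : ℝ) :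
    d ^ b * (A / d ^ 2) ^ p = A ^ p * d ^ (b - 2 * p) := by
  rw [Real.div_rpow hA (by positivity), Real.rpow_sub hd, Real.rpow_mul hd.le, Real.rpow_two]
  ring

section Kernel

variable {n : ℕ} {s θ τ : ℝ} {x z : EuclideanSpace ℝ (Fin n)}

lemma rZero_self (x : EuclideanSpace ℝ (Fin n)) : rZero x x = 0 := by
  simp [rZero]

lemma rZero_nonneg (hx : ‖x‖ < 1) (hz : ‖z‖ < 1) : 0 ≤ rZero x z :=
  div_nonneg (mul_nonneg (one_sub_norm_sq_pos hx).le (one_sub_norm_sq_pos hz).le) (by positivity)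

lemma measurable_rZero (x : EuclideanSpace ℝ (Fin n)) : Measurable (rZero x) := by
  unfold rZero
  fun_prop

lemma one_sub_norm_sq_le_of_rZero_le_half (hx : ‖x‖ < 1) (hz : ‖z‖ < 1) (hzx : z ≠ x)
    (hr : rZero x z ≤ 1 / 2) : 1 - ‖z‖ ^ 2 ≤ 3 * ‖z - x‖ := by
  have hd : 0 < ‖z - x‖ := norm_pos_iff.2 (sub_ne_zero.2 hzx)
  have hq := one_sub_norm_sq_le hx hz
  rw [rZero, div_le_iff₀ (by positivity)] at hr
  by_contra! hlt
  nlinarith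

lemma one_sub_norm_sq_le_of_half_lt_rZero (hx : ‖x‖ < 1) (hz : ‖z‖ < 1)
    (hr : 1 / 2 < rZero x z) : 1 - ‖z‖ ^ 2 ≤ 10 * (1 - ‖x‖ ^ 2) := by
  have hzx : z ≠ x := by
    rintro rfl
    norm_num [rZero_self] at hr
  have hd : 0 < ‖z - x‖ := norm_pos_iff.2 (sub_ne_zero.2 hzx)
  have hq := one_sub_norm_sq_le hx hz
  have hqx := one_sub_norm_sq_pos hx
  rw [rZero, lt_div_iff₀ (by positivity)] at hr
  by_contra! hlt
  nlinarith

lemma fracGreen_eq (n : ℕ) (s : ℝ) (x z : EuclideanSpace ℝ (Fin n)) :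
    fracGreen n s x z = ‖z - x‖ ^ (2 * s - n) * greenProfile (n / 2) s (rZero x z) := rfl

lemma fracGreen_self (n : ℕ) (s : ℝ) (x : EuclideanSpace ℝ (Fin n)) : fracGreen n s x x = 0 := by
  simp [fracGreen, rZero_self]

lemma fracGreenPrincipal_self (n : ℕ) (hs : s ≠ 0) (x : EuclideanSpace ℝ (Fin n)) :
    fracGreenPrincipal n s x x = 0 := by
  simp [fracGreenPrincipal, rOne, rZero_self, Real.zero_rpow hs]

lemma fracGreen_nonneg (s : ℝ) (hx : ‖x‖ < 1) (hz : ‖z‖ < 1) : 0 ≤ fracGreen n s x z :=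
  mul_nonneg (by positivity) (greenProfile_nonneg _ s (rZero_nonneg hx hz))

lemma fracGreen_le (hθ : 0 ≤ θ) (hθs : θ < s) (hθn : θ ≤ n / 2) (hx : ‖x‖ < 1) (hz : ‖z‖ < 1) :
    fracGreen n s x z ≤
      (s - θ)⁻¹ * ((1 - ‖x‖ ^ 2) * (1 - ‖z‖ ^ 2)) ^ (s - θ) * ‖z - x‖ ^ (2 * θ - n) := by
  have : 0 < s - θ := sub_pos.2 hθs
  have hqx := one_sub_norm_sq_pos hx
  have hqz := one_sub_norm_sq_pos hz
  rcases eq_or_ne z x with rfl | hzx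
  · rw [fracGreen_self]
    positivity
  have hd : 0 < ‖z - x‖ := norm_pos_iff.2 (sub_ne_zero.2 hzx)
  calc fracGreen n s x z
      ≤ ‖z - x‖ ^ (2 * s - n) * (rZero x z ^ (s - θ) / (s - θ)) := by
        rw [fracGreen_eq]
        gcongr
        exact greenProfile_le_rpow hθ hθs hθn (rZero_nonneg hx hz)
    _ = (s - θ)⁻¹ * (‖z - x‖ ^ (2 * s - n) * rZero x z ^ (s - θ)) := by ring
    _ = _ := by
        rw [rZero, rpow_mul_div_sq_rpow hd (by positivity),
          show 2 * s - n - 2 * (s - θ) = 2 * θ - n by ring, mul_assoc]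

lemma fracGreen_le_of_half_lt_rZero (hθ : 0 ≤ θ) (hθs : θ < s) (hθn : θ ≤ n / 2)
    (hx : ‖x‖ < 1) (hz : ‖z‖ < 1) (hr : 1 / 2 < rZero x z) :
    fracGreen n s x z ≤
      10 ^ (s - θ) / (s - θ) * (1 - ‖x‖ ^ 2) ^ (2 * (s - θ)) * ‖z - x‖ ^ (2 * θ - n) := by
  have : 0 < s - θ := sub_pos.2 hθs
  have hqx := one_sub_norm_sq_pos hx
  have hqz := one_sub_norm_sq_pos hz
  calc fracGreen n s x z
      ≤ (s - θ)⁻¹ * ((1 - ‖x‖ ^ 2) * (1 - ‖z‖ ^ 2)) ^ (s - θ) * ‖z - x‖ ^ (2 * θ - n) :=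
        fracGreen_le hθ hθs hθn hx hz
    _ ≤ (s - θ)⁻¹ * (10 * (1 - ‖x‖ ^ 2) ^ 2) ^ (s - θ) * ‖z - x‖ ^ (2 * θ - n) := by
        gcongr ?_ * ?_ ^ _ * _
        nlinarith [one_sub_norm_sq_le_of_half_lt_rZero hx hz hr]
    _ = _ := by
        rw [Real.mul_rpow (by norm_num) (by positivity), Real.rpow_mul hqx.le, Real.rpow_two]
        ring

lemma abs_fracGreen_sub_fracGreenPrincipal_le (hs : 0 < s) (hτ : 0 ≤ τ) (hτ1 : τ ≤ 1)
    (hx : ‖x‖ < 1) (hz : ‖z‖ < 1) (hzx : z ≠ x) (hr : rZero x z ≤ 1 / 2) :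
    |fracGreen n s x z - fracGreenPrincipal n s x z| ≤
      n / 2 * 3 ^ (s + τ) * (1 - ‖x‖ ^ 2) ^ (s + τ) * ‖z - x‖ ^ (s - τ - n) := by
  have hqx := one_sub_norm_sq_pos hx
  have hqz := one_sub_norm_sq_pos hz
  have hd : 0 < ‖z - x‖ := norm_pos_iff.2 (sub_ne_zero.2 hzx)
  have hr0 := rZero_nonneg hx hz
  have hprofile : |greenProfile (n / 2) s (rZero x z) - rZero x z ^ s / s| ≤
      n / 2 * rZero x z ^ (s + τ) :=
    (abs_greenProfile_sub_le (by positivity) hs hr0).trans <| mul_le_mul_of_nonneg_left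
      (Real.rpow_le_rpow_of_exponent_ge' hr0 (by linarith) (by linarith) (by linarith))
      (by positivity)
  calc |fracGreen n s x z - fracGreenPrincipal n s x z|
      = ‖z - x‖ ^ (2 * s - n) * |greenProfile (n / 2) s (rZero x z) - rZero x z ^ s / s| := by
        rw [fracGreen_eq, fracGreenPrincipal, rOne, min_eq_left hr, div_mul_eq_mul_div,
          mul_div_assoc, ← mul_sub, abs_mul, abs_of_nonneg (by positivity)]
    _ ≤ ‖z - x‖ ^ (2 * s - n) * (n / 2 * rZero x z ^ (s + τ)) := by gcongr
    _ = n / 2 * (((1 - ‖x‖ ^ 2) * (1 - ‖z‖ ^ 2)) ^ (s + τ) *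
          ‖z - x‖ ^ (2 * s - n - 2 * (s + τ))) := by
        rw [mul_left_comm, rZero, rpow_mul_div_sq_rpow hd (by positivity)]
    _ ≤ n / 2 * (((1 - ‖x‖ ^ 2) * (3 * ‖z - x‖)) ^ (s + τ) *
          ‖z - x‖ ^ (2 * s - n - 2 * (s + τ))) := by
        gcongr
        exact one_sub_norm_sq_le_of_rZero_le_half hx hz hzx hr
    _ = _ := by
        rw [Real.mul_rpow hqx.le (by positivity), Real.mul_rpow (by norm_num) hd.le,
          show s - τ - n = s + τ + (2 * s - n - 2 * (s + τ)) by ring, Real.rpow_add hd (s + τ)]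
        ring

/-- The error made on the kernel `G(x, ·)` when it is replaced by `𝒢₀(x, ·)` where `r₀ ≤ 1/2` and
discarded elsewhere. -/
noncomputable def greenRemainder (n : ℕ) (s : ℝ) (x z : EuclideanSpace ℝ (Fin n)) : ℝ :=
  fracGreen n s x z - {z | rZero x z ≤ 1 / 2}.indicator (fracGreenPrincipal n s x) z

lemma greenRemainder_self (n : ℕ) (hs : s ≠ 0) (x : EuclideanSpace ℝ (Fin n)) :
    greenRemainder n s x x = 0 := by
  simp [greenRemainder, indicator_apply, fracGreen_self, fracGreenPrincipal_self n hs]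

lemma greenRemainder_of_rZero_le_half (hr : rZero x z ≤ 1 / 2) :
    greenRemainder n s x z = fracGreen n s x z - fracGreenPrincipal n s x z := by
  rw [greenRemainder, indicator_of_mem (by exact hr)]

lemma greenRemainder_of_half_lt_rZero (hr : 1 / 2 < rZero x z) :
    greenRemainder n s x z = fracGreen n s x z := by
  rw [greenRemainder, indicator_of_notMem (by exact not_le.2 hr), sub_zero]

lemma exists_abs_greenRemainder_le (hs : 0 < s) (hτ : 0 ≤ τ) (hτ1 : τ ≤ 1) (hτs : 2 * τ ≤ s)
    (hτn : τ ≤ n) :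
    ∃ C : ℝ, 0 ≤ C ∧ ∀ x z : EuclideanSpace ℝ (Fin n), ‖x‖ < 1 → ‖z‖ < 1 →
      |greenRemainder n s x z| ≤ C * (1 - ‖x‖ ^ 2) ^ (s + τ) * ‖z - x‖ ^ (τ - n) := by
  have hsτ : 0 < s - τ / 2 := by linarith
  set Cnear : ℝ := 10 ^ (s - τ / 2) / (s - τ / 2)
  set Cfar : ℝ := n / 2 * 3 ^ (s + τ) * 2 ^ (s - 2 * τ)
  have hnear0 : 0 ≤ Cnear := by positivity
  have hfar0 : 0 ≤ Cfar := by positivity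
  refine ⟨Cnear + Cfar, by positivity, fun x z hx hz => ?_⟩
  have hqx := one_sub_norm_sq_pos hx
  rcases eq_or_ne z x with rfl | hzx
  · rw [greenRemainder_self n hs.ne', abs_zero]
    positivity
  have hd : 0 < ‖z - x‖ := norm_pos_iff.2 (sub_ne_zero.2 hzx)
  rcases le_or_gt (rZero x z) (1 / 2) with hr | hr
  · have hdist : ‖z - x‖ ^ (s - τ - n) ≤ 2 ^ (s - 2 * τ) * ‖z - x‖ ^ (τ - n) := by
      rw [show s - τ - n = s - 2 * τ + (τ - n) by ring, Real.rpow_add hd]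
      gcongr ?_ * _
      exact Real.rpow_le_rpow hd.le (norm_sub_le_two hx hz) (by linarith)
    calc |greenRemainder n s x z|
        ≤ n / 2 * 3 ^ (s + τ) * (1 - ‖x‖ ^ 2) ^ (s + τ) * ‖z - x‖ ^ (s - τ - n) := by
          rw [greenRemainder_of_rZero_le_half hr]
          exact abs_fracGreen_sub_fracGreenPrincipal_le hs hτ hτ1 hx hz hzx hr
      _ ≤ n / 2 * 3 ^ (s + τ) * (1 - ‖x‖ ^ 2) ^ (s + τ) *
            (2 ^ (s - 2 * τ) * ‖z - x‖ ^ (τ - n)) := by gcongr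
      _ = Cfar * (1 - ‖x‖ ^ 2) ^ (s + τ) * ‖z - x‖ ^ (τ - n) := by ring
      _ ≤ _ := by gcongr; exact le_add_of_nonneg_left hnear0
  · calc |greenRemainder n s x z|
        ≤ Cnear * (1 - ‖x‖ ^ 2) ^ (2 * (s - τ / 2)) * ‖z - x‖ ^ (2 * (τ / 2) - n) := by
          rw [greenRemainder_of_half_lt_rZero hr, abs_of_nonneg (fracGreen_nonneg s hx hz)]
          exact fracGreen_le_of_half_lt_rZero (by linarith) (by linarith) (by linarith) hx hz hr
      _ ≤ Cnear * (1 - ‖x‖ ^ 2) ^ (s + τ) * ‖z - x‖ ^ (τ - n) := by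
          rw [mul_div_cancel₀ τ two_ne_zero]
          gcongr Cnear * ?_ * _
          exact Real.rpow_le_rpow_of_exponent_ge hqx (sub_le_self _ (by positivity)) (by linarith)
      _ ≤ _ := by gcongr; exact le_add_of_nonneg_right hfar0

end Kernel

section Integrals

variable {n : ℕ} {s τ : ℝ} {x : EuclideanSpace ℝ (Fin n)}

lemma aestronglyMeasurable_fracGreen (hs : 0 < s) (hx : ‖x‖ < 1) :
    AEStronglyMeasurable (fracGreen n s x) (volume.restrict (ball 0 1)) := by
  have hmono : Monotone fun r : ℝ => greenProfile (n / 2) s (max 0 r) := fun _ _ hr =>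
    monotoneOn_greenProfile _ hs (mem_Ici.2 (le_max_left _ _)) (mem_Ici.2 (le_max_left _ _))
      (max_le_max_left 0 hr)
  have hmeas : Measurable fun z : EuclideanSpace ℝ (Fin n) =>
      ‖z - x‖ ^ (2 * s - n) * greenProfile (n / 2) s (max 0 (rZero x z)) :=
    ((measurable_id.sub_const x).norm.pow_const _).mul (hmono.measurable.comp (measurable_rZero x))
  refine hmeas.aestronglyMeasurable.congr ?_
  filter_upwards [ae_restrict_mem measurableSet_ball] with z hz
  rw [fracGreen_eq, max_eq_right (rZero_nonneg hx (mem_ball_zero_iff.1 hz))]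

lemma measurable_fracGreenPrincipal (n : ℕ) (s : ℝ) (x : EuclideanSpace ℝ (Fin n)) :
    Measurable (fracGreenPrincipal n s x) :=
  (((measurable_id.sub_const x).norm.pow_const _).div_const s).mul
    (((measurable_rZero x).min measurable_const).pow_const s)

lemma integrableOn_unitBall_norm_sub_rpow (hn : 1 ≤ n) {p : ℝ} (hp : -(n : ℝ) < p)
    (hx : ‖x‖ < 1) :
    IntegrableOn (fun z : EuclideanSpace ℝ (Fin n) => ‖z - x‖ ^ p) (ball 0 1) :=
  (integrableOn_ball_norm_sub_rpow volume (by simpa using hn) (by simpa using hp) x 2).mono_set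
    (unitBall_subset_ball_two hx)

lemma integrableOn_fracGreen (hn : 1 ≤ n) (hs : 0 < s) (hx : ‖x‖ < 1) :
    IntegrableOn (fracGreen n s x) (ball 0 1) := by
  have hqx := one_sub_norm_sq_pos hx
  have hn1 : (1 : ℝ) ≤ n := mod_cast hn
  obtain ⟨θ, hθ, hθ_min⟩ := exists_between (lt_min hs (one_half_pos : (0 : ℝ) < 1 / 2))
  obtain ⟨hθs, hθ_half⟩ := lt_min_iff.1 hθ_min
  have hsθ : 0 < s - θ := sub_pos.2 hθs
  refine ((integrableOn_unitBall_norm_sub_rpow hn (p := 2 * θ - n) (by linarith) hx).const_mul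
    (s - θ)⁻¹).mono' (aestronglyMeasurable_fracGreen hs hx) ?_
  filter_upwards [ae_restrict_mem measurableSet_ball] with z hz
  have hz1 : ‖z‖ < 1 := mem_ball_zero_iff.1 hz
  have hqz := one_sub_norm_sq_pos hz1
  have hq : ((1 - ‖x‖ ^ 2) * (1 - ‖z‖ ^ 2)) ^ (s - θ) ≤ 1 :=
    Real.rpow_le_one (by positivity) (mul_le_one₀ (sub_le_self _ (by positivity)) hqz.le
      (sub_le_self _ (by positivity))) hsθ.le
  rw [Real.norm_of_nonneg (fracGreen_nonneg s hx hz1)]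
  refine (fracGreen_le hθ.le hθs (by linarith) hx hz1).trans ?_
  gcongr
  exact mul_le_of_le_one_right (by positivity) hq

lemma integrableOn_fracGreenPrincipal (hn : 1 ≤ n) (hs : 0 < s) (hx : ‖x‖ < 1) :
    IntegrableOn (fracGreenPrincipal n s x) (ball 0 1) := by
  refine ((integrableOn_unitBall_norm_sub_rpow hn (p := 2 * s - n) (by linarith) hx).div_const
    s).mono' (measurable_fracGreenPrincipal n s x).aestronglyMeasurable ?_
  filter_upwards [ae_restrict_mem measurableSet_ball] with z hz
  have hr : 0 ≤ rOne x z := le_min (rZero_nonneg hx (mem_ball_zero_iff.1 hz)) (by norm_num)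
  have hr1 : rOne x z ≤ 1 := (min_le_right _ _).trans (by norm_num)
  rw [fracGreenPrincipal, Real.norm_of_nonneg (by positivity)]
  exact mul_le_of_le_one_right (by positivity) (Real.rpow_le_one hr hr1 hs.le)

variable {f : EuclideanSpace ℝ (Fin n) → ℝ} {M : ℝ}

lemma setIntegral_fracGreen_sub_setIntegral_fracGreenPrincipal (hn : 1 ≤ n) (hs : 0 < s)
    (hf : AEStronglyMeasurable f (volume.restrict (ball 0 1)))
    (hM : ∀ᵐ z ∂volume.restrict (ball 0 1), |f z| ≤ M) (hx : ‖x‖ < 1) :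
    (∫ z in ball 0 1, f z * fracGreen n s x z) -
        ∫ z in {z ∈ ball 0 1 | rZero x z ≤ 1 / 2}, f z * fracGreenPrincipal n s x z =
      ∫ z in ball 0 1, f z * greenRemainder n s x z := by
  have hD : MeasurableSet {z | rZero x z ≤ 1 / 2} := measurable_rZero x measurableSet_Iic
  have hG : IntegrableOn (fun z => f z * fracGreen n s x z) (ball 0 1) :=
    (integrableOn_fracGreen hn hs hx).bdd_mul hf hM
  have hP : IntegrableOn (fun z => f z * fracGreenPrincipal n s x z) (ball 0 1) :=
    (integrableOn_fracGreenPrincipal hn hs hx).bdd_mul hf hM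
  rw [show {z ∈ ball 0 1 | rZero x z ≤ 1 / 2} = ball 0 1 ∩ {z | rZero x z ≤ 1 / 2} from rfl,
    ← setIntegral_indicator hD, ← integral_sub hG (hP.indicator hD)]
  simp only [greenRemainder, mul_sub, indicator_mul_right]

lemma exists_abs_setIntegral_greenRemainder_le (hn : 1 ≤ n) (hτ : 0 < τ) (hτ1 : τ ≤ 1)
    (hτs : 2 * τ ≤ s) (hM : ∀ᵐ z ∂volume.restrict (ball 0 1), |f z| ≤ M) :
    ∃ L : ℝ, ∀ x : EuclideanSpace ℝ (Fin n), ‖x‖ < 1 →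
      |∫ z in ball 0 1, f z * greenRemainder n s x z| ≤ L * (1 - ‖x‖ ^ 2) ^ (s + τ) := by
  have hn1 : (1 : ℝ) ≤ n := mod_cast hn
  obtain ⟨C, hC, hR⟩ := exists_abs_greenRemainder_le (n := n) (by linarith) hτ.le hτ1 hτs
    (hτ1.trans hn1)
  set I : ℝ := ∫ z in ball (0 : EuclideanSpace ℝ (Fin n)) 2, ‖z‖ ^ (τ - n)
  refine ⟨|M| * C * I, fun x hx => ?_⟩
  have hqx := one_sub_norm_sq_pos hx
  have hpointwise : ∀ᵐ z ∂volume.restrict (ball 0 1), ‖f z * greenRemainder n s x z‖ ≤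
      |M| * (C * (1 - ‖x‖ ^ 2) ^ (s + τ)) * ‖z - x‖ ^ (τ - n) := by
    filter_upwards [hM, ae_restrict_mem measurableSet_ball] with z hfz hz
    rw [norm_mul, mul_assoc]
    exact mul_le_mul (hfz.trans (le_abs_self M)) (hR x z hx (mem_ball_zero_iff.1 hz))
      (norm_nonneg _) (abs_nonneg M)
  calc |∫ z in ball 0 1, f z * greenRemainder n s x z|
      ≤ ∫ z in ball 0 1, |M| * (C * (1 - ‖x‖ ^ 2) ^ (s + τ)) * ‖z - x‖ ^ (τ - n) :=
        norm_integral_le_of_norm_le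
          ((integrableOn_unitBall_norm_sub_rpow hn (by linarith) hx).const_mul _) hpointwise
    _ = |M| * (C * (1 - ‖x‖ ^ 2) ^ (s + τ)) * ∫ z in ball 0 1, ‖z - x‖ ^ (τ - n) :=
        MeasureTheory.integral_const_mul _ _
    _ ≤ |M| * (C * (1 - ‖x‖ ^ 2) ^ (s + τ)) * I := by
        gcongr
        exact setIntegral_norm_sub_rpow_le volume (by simpa using hn) (by simpa using hτ)
          (unitBall_subset_ball_two hx)
    _ = |M| * C * I * (1 - ‖x‖ ^ 2) ^ (s + τ) := by ring

end Integrals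

section Asymptotics

open Asymptotics

variable {ι : Type*} {l : Filter ι} {δ : ι → ℝ}

lemma isLittleO_rpow_rpow_nhdsGT_zero {p q : ℝ} (hpq : p < q) :
    (fun t : ℝ => t ^ q) =o[nhdsWithin 0 (Ioi 0)] fun t => t ^ p := by
  have hlim : Tendsto (fun t : ℝ => t ^ (q - p)) (nhdsWithin 0 (Ioi 0)) (nhds 0) := by
    have hcont := (Real.continuous_rpow_const (sub_pos.2 hpq).le).tendsto 0
    rw [Real.zero_rpow (sub_pos.2 hpq).ne'] at hcont
    exact hcont.mono_left nhdsWithin_le_nhds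
  refine isLittleO_of_tendsto' ?_ (hlim.congr' ?_) <;>
    filter_upwards [self_mem_nhdsWithin] with t (ht : 0 < t)
  · exact fun h => absurd h (Real.rpow_pos_of_pos ht p).ne'
  · exact Real.rpow_sub ht q p

lemma isBigO_one_sub_norm_sq {E : Type*} [SeminormedAddCommGroup E] {x : ι → E}
    (hx : ∀ᶠ i in l, ‖x i‖ < 1) (hxδ : (fun i => 1 - ‖x i‖) =O[l] δ) :
    (fun i => 1 - ‖x i‖ ^ 2) =O[l] δ := by
  refine IsBigO.trans (.of_bound 2 ?_) hxδ
  filter_upwards [hx] with i hi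
  rw [Real.norm_of_nonneg (one_sub_norm_sq_pos hi).le, Real.norm_of_nonneg (by linarith)]
  nlinarith [norm_nonneg (x i)]

lemma isBigO_one_sub_norm_add_smul {E : Type*} [SeminormedAddCommGroup E] [NormedSpace ℝ E]
    {e : E} (he : ‖e‖ = 1) (ω : E) :
    (fun ε : ℝ => 1 - ‖e + ε • ω‖) =O[nhds 0] id := by
  refine .of_bound ‖ω‖ (Eventually.of_forall fun ε => ?_)
  have h := abs_norm_sub_norm_le e (e + ε • ω)
  rw [he, sub_add_cancel_left, norm_neg, norm_smul, mul_comm] at h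
  exact h

lemma continuous_of_norm_sub_le_rpow {E F : Type*} [SeminormedAddCommGroup E]
    [SeminormedAddCommGroup F] {f : E → F} {C α : ℝ} (hα : 0 < α)
    (hf : ∀ x y, ‖f x - f y‖ ≤ C * ‖x - y‖ ^ α) : Continuous f := by
  refine continuous_iff_continuousAt.2 fun y => tendsto_iff_norm_sub_tendsto_zero.2 ?_
  refine squeeze_zero (fun _ => norm_nonneg _) (fun x => hf x y) ?_
  have hcont : Continuous fun x => C * ‖x - y‖ ^ α := by fun_prop (disch := positivity)
  simpa [Real.zero_rpow hα.ne'] using hcont.tendsto y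

theorem green_reduction_to_principal_part_general {n : ℕ} (hn : 1 ≤ n) {s : ℝ} (hs : 0 < s)
    {x : ι → EuclideanSpace ℝ (Fin n)} (hδ : Tendsto δ l (nhdsWithin 0 (Ioi 0)))
    (hx : ∀ᶠ i in l, ‖x i‖ < 1) (hxδ : (fun i => 1 - ‖x i‖) =O[l] δ)
    {f : EuclideanSpace ℝ (Fin n) → ℝ}
    (hf : AEStronglyMeasurable f (volume.restrict (ball 0 1)))
    {M : ℝ} (hM : ∀ᵐ z ∂volume.restrict (ball 0 1), |f z| ≤ M) :
    Tendsto (fun i => δ i ^ (-s) *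
        ((∫ z in ball 0 1, f z * fracGreen n s (x i) z) -
          ∫ z in {z ∈ ball 0 1 | rZero (x i) z ≤ 1 / 2}, f z * fracGreenPrincipal n s (x i) z))
      l (nhds 0) := by
  have hδ_pos : ∀ᶠ i in l, 0 < δ i := hδ.eventually self_mem_nhdsWithin
  obtain ⟨τ, hτ, hτ1, hτs⟩ : ∃ τ : ℝ, 0 < τ ∧ τ ≤ 1 ∧ 2 * τ ≤ s :=
    ⟨min 1 (s / 2), by positivity, min_le_left _ _, by linarith [min_le_right 1 (s / 2)]⟩
  obtain ⟨L, hL⟩ := exists_abs_setIntegral_greenRemainder_le hn hτ hτ1 hτs hM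
  have hbig : (fun i => ∫ z in ball 0 1, f z * greenRemainder n s (x i) z) =O[l]
      fun i => δ i ^ (s + τ) := by
    refine IsBigO.trans (g := fun i => (1 - ‖x i‖ ^ 2) ^ (s + τ)) (.of_bound L ?_)
      ((isBigO_one_sub_norm_sq hx hxδ).rpow (by positivity) (hδ_pos.mono fun _ => le_of_lt))
    filter_upwards [hx] with i hi
    have hq := one_sub_norm_sq_pos hi
    rw [Real.norm_of_nonneg (Real.rpow_nonneg hq.le _)]
    exact hL (x i) hi
  refine (hbig.trans_isLittleO ((isLittleO_rpow_rpow_nhdsGT_zero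
    (lt_add_of_pos_right s hτ)).comp_tendsto hδ)).tendsto_div_nhds_zero.congr' ?_
  filter_upwards [hx, hδ_pos] with i hi hδi
  rw [setIntegral_fracGreen_sub_setIntegral_fracGreenPrincipal hn hs hf hM hi,
    Real.rpow_neg hδi.le, div_eq_inv_mul, Function.comp_apply]

end Asymptotics

/-- Reduction of the fractional Green function to its principal part near the boundary:
`∫_{B₁} f G(e+εω,·) = ∫_{𝒟₂(ε)} f 𝒢₀(e+εω,·) + o(ε^s)` as `ε → 0⁺`, where
`𝒟₂(ε) = {z ∈ B₁ : r₀(e+εω,z) ≤ 1/2}`. -/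
theorem green_reduction_to_principal_part
    (n : ℕ) (hn : 1 ≤ n) (s : ℝ) (hs : s ∈ Set.Ioo (0 : ℝ) 1)
    (α : ℝ) (hα : α ∈ Set.Ioo (0 : ℝ) 1)
    (e ω : EuclideanSpace ℝ (Fin n)) (he : ‖e‖ = 1) (hω : ‖ω‖ = 1)
    (εo : ℝ) (hεo : 0 < εo)
    (hin : ∀ ε ∈ Set.Ioc (0 : ℝ) εo,
      e + ε • ω ∈ Metric.ball (0 : EuclideanSpace ℝ (Fin n)) 1)
    (f : EuclideanSpace ℝ (Fin n) → ℝ)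
    (hfH : ∃ C : ℝ, ∀ x y : EuclideanSpace ℝ (Fin n), |f x - f y| ≤ C * ‖x - y‖ ^ α)
    (hfb : ∃ M : ℝ, ∀ x : EuclideanSpace ℝ (Fin n), |f x| ≤ M)
    (hf0 : ∀ x ∉ Metric.ball (0 : EuclideanSpace ℝ (Fin n)) 1, f x = 0) :
    Tendsto (fun ε : ℝ =>
        ε ^ (-s) *
          ((∫ z in Metric.ball (0 : EuclideanSpace ℝ (Fin n)) 1,
              f z * fracGreen n s (e + ε • ω) z) -
            ∫ z in {z ∈ Metric.ball (0 : EuclideanSpace ℝ (Fin n)) 1 |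
                rZero (e + ε • ω) z ≤ 1 / 2},
              f z * fracGreenPrincipal n s (e + ε • ω) z))
      (nhdsWithin 0 (Set.Ioi 0)) (nhds 0) := by
  obtain ⟨C, hC⟩ := hfH
  obtain ⟨M, hM⟩ := hfb
  have hf : Continuous f := continuous_of_norm_sub_le_rpow hα.1 hC
  exact green_reduction_to_principal_part_general hn hs.1 tendsto_id
    (by filter_upwards [Ioc_mem_nhdsGT hεo] with ε hε using mem_ball_zero_iff.1 (hin ε hε))
    ((isBigO_one_sub_norm_add_smul he ω).mono nhdsWithin_le_nhds)
    hf.aestronglyMeasurable (Eventually.of_forall hM)
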